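/- The dimension of the null space of the data-driven Hodge Laplacian equals the dimension of the corresponding homology: dim ker(Δ1) = dim ker(d1) − dim im(d0), i.e. dim ker(Δ1) equals the dimension of the quotient space ker(d1)/im(d0). -/

import Mathlib

open Matrix

/-- Data-driven coboundary `d_k := B_{k+1} δ_k B_k⁻¹`. -/
noncomputable def dd {m n : ℕ} (δ : Matrix (Fin m) (Fin n) ℝ)
    (bl : Fin n → ℝ) (bu : Fin m → ℝ) : Matrix (Fin m) (Fin n) ℝ :=
  Matrix.diagonal bu * δ * (Matrix.diagonal bl)⁻¹

/-- Data-driven codifferential `d_k^* := D_k⁻¹ δ_kᵀ D_{k+1}`. -/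
noncomputable def dds {m n : ℕ} (δ : Matrix (Fin m) (Fin n) ℝ)
    (dl : Fin n → ℝ) (du : Fin m → ℝ) : Matrix (Fin n) (Fin m) ℝ :=
  (Matrix.diagonal dl)⁻¹ * δ.transpose * Matrix.diagonal du

/-- Weighted inner product `⟨x, y⟩_k := xᵀ D_k B_k⁻¹ y` on `C^k`. -/
noncomputable def wip {n : ℕ} (dv bv : Fin n → ℝ) (x y : Fin n → ℝ) : ℝ :=
  x ⬝ᵥ ((Matrix.diagonal dv * (Matrix.diagonal bv)⁻¹) *ᵥ y)

theorem aux_inv {n : ℕ} (b : Fin n → ℝ) (hb : ∀ i, 0 < b i) :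
    (Matrix.diagonal b)⁻¹ = Matrix.diagonal (fun i => (b i)⁻¹) := by
  apply Matrix.inv_eq_left_inv
  rw [Matrix.diagonal_mul_diagonal, ← Matrix.diagonal_one]
  congr 1
  funext i
  exact inv_mul_cancel₀ (hb i).ne'

theorem aux_wip {n : ℕ} (d b : Fin n → ℝ) (hb : ∀ i, 0 < b i) (x y : Fin n → ℝ) :
    wip d b x y = ∑ i, x i * (d i * (b i)⁻¹ * y i) := by
  unfold wip
  rw [aux_inv b hb, Matrix.diagonal_mul_diagonal]
  simp [dotProduct, Matrix.mulVec_diagonal]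

theorem aux_comm {n : ℕ} (d b : Fin n → ℝ) (hb : ∀ i, 0 < b i) (x y : Fin n → ℝ) :
    wip d b x y = wip d b y x := by
  rw [aux_wip d b hb, aux_wip d b hb]
  exact Finset.sum_congr rfl fun i _ => by ring

theorem aux_nonneg {n : ℕ} (d b : Fin n → ℝ) (hd : ∀ i, 0 < d i) (hb : ∀ i, 0 < b i)
    (x : Fin n → ℝ) : 0 ≤ wip d b x x := by
  rw [aux_wip d b hb]
  refine Finset.sum_nonneg fun i _ => ?_
  have h : 0 < d i * (b i)⁻¹ := mul_pos (hd i) (inv_pos.2 (hb i))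
  nlinarith [mul_nonneg h.le (mul_self_nonneg (x i))]

theorem aux_def {n : ℕ} (d b : Fin n → ℝ) (hd : ∀ i, 0 < d i) (hb : ∀ i, 0 < b i)
    (x : Fin n → ℝ) (hx : wip d b x x = 0) : x = 0 := by
  rw [aux_wip d b hb] at hx
  have h (i) : 0 < d i * (b i)⁻¹ := mul_pos (hd i) (inv_pos.2 (hb i))
  rw [Finset.sum_eq_zero_iff_of_nonneg
    (fun i _ => by nlinarith [mul_nonneg (h i).le (mul_self_nonneg (x i))])] at hx
  funext i
  have := hx i (Finset.mem_univ i)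
  have h' := (h i).ne'
  simp only [mul_eq_zero, Pi.zero_apply] at this ⊢
  simp only [ne_eq, mul_eq_zero] at h'
  tauto

theorem aux_adj {m n : ℕ} (δ : Matrix (Fin m) (Fin n) ℝ) (dl bl : Fin n → ℝ)
    (du bu : Fin m → ℝ) (hdl : ∀ i, 0 < dl i) (hbl : ∀ i, 0 < bl i) (hbu : ∀ i, 0 < bu i)
    (x : Fin m → ℝ) (z : Fin n → ℝ) :
    wip du bu x (dd δ bl bu *ᵥ z) = wip dl bl (dds δ dl du *ᵥ x) z := by
  rw [aux_wip du bu hbu, aux_wip dl bl hbl]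
  unfold dd dds
  rw [aux_inv bl hbl, aux_inv dl hdl]
  simp only [Matrix.mulVec, dotProduct, Matrix.mul_diagonal, Matrix.diagonal_mul,
    Matrix.transpose_apply, Finset.mul_sum, Finset.sum_mul]
  rw [Finset.sum_comm]
  refine Finset.sum_congr rfl fun i _ => Finset.sum_congr rfl fun j _ => ?_
  have h1 := (hbu j).ne'
  have h2 := (hdl i).ne'
  have h3 := (hbl i).ne'
  field_simp

theorem aux_diag_unit {n : ℕ} (b : Fin n → ℝ) (hb : ∀ i, 0 < b i) :
    IsUnit (Matrix.diagonal b).det := by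
  rw [Matrix.det_diagonal]
  exact (Finset.prod_pos fun i _ => hb i).ne'.isUnit

theorem aux_rank {m n : ℕ} (δ : Matrix (Fin m) (Fin n) ℝ) (dl bl : Fin n → ℝ)
    (du bu : Fin m → ℝ) (hdl : ∀ i, 0 < dl i) (hbl : ∀ i, 0 < bl i)
    (hdu : ∀ i, 0 < du i) (hbu : ∀ i, 0 < bu i) :
    (dds δ dl du).rank = (dd δ bl bu).rank := by
  unfold dd dds
  rw [aux_inv bl hbl, aux_inv dl hdl,
    Matrix.rank_mul_eq_left_of_isUnit_det _ _ (aux_diag_unit _ hdu),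
    Matrix.rank_mul_eq_right_of_isUnit_det _ _ (aux_diag_unit _ fun i => inv_pos.2 (hdl i)),
    Matrix.rank_mul_eq_left_of_isUnit_det _ _ (aux_diag_unit _ fun i => inv_pos.2 (hbl i)),
    Matrix.rank_mul_eq_right_of_isUnit_det _ _ (aux_diag_unit _ hbu), Matrix.rank_transpose]

/-- The dimension of the null space of the data-driven Hodge Laplacian equals the dimension of
the corresponding homology: `dim ker(Δ1) = dim ker(d1) − dim im(d0)` (the dimension of the
quotient `ker(d1)/im(d0)`, since `im(d0) ⊆ ker(d1)`). -/
theorem ddec_hodge_laplacian_kernel_dim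
    (n0 n1 n2 : ℕ) (hn0 : 0 < n0) (hn1 : 0 < n1) (hn2 : 0 < n2)
    (δ0 : Matrix (Fin n1) (Fin n0) ℝ) (δ1 : Matrix (Fin n2) (Fin n1) ℝ)
    (hδ : δ1 * δ0 = 0)
    (bv0 : Fin n0 → ℝ) (bv1 : Fin n1 → ℝ) (bv2 : Fin n2 → ℝ)
    (hb0 : ∀ i, 0 < bv0 i) (hb1 : ∀ i, 0 < bv1 i) (hb2 : ∀ i, 0 < bv2 i)
    (dv0 : Fin n0 → ℝ) (dv1 : Fin n1 → ℝ) (dv2 : Fin n2 → ℝ)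
    (hd0 : ∀ i, 0 < dv0 i) (hd1 : ∀ i, 0 < dv1 i) (hd2 : ∀ i, 0 < dv2 i)
    :
    Module.finrank ℝ
        (LinearMap.ker ((dd δ0 bv0 bv1 * dds δ0 dv0 dv1 +
          dds δ1 dv1 dv2 * dd δ1 bv1 bv2).mulVecLin)) =
      Module.finrank ℝ (LinearMap.ker (dd δ1 bv1 bv2).mulVecLin) -
      Module.finrank ℝ (LinearMap.range (dd δ0 bv0 bv1).mulVecLin) := by
  have hK : LinearMap.ker ((dd δ0 bv0 bv1 * dds δ0 dv0 dv1 +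
      dds δ1 dv1 dv2 * dd δ1 bv1 bv2).mulVecLin) =
      LinearMap.ker (dd δ1 bv1 bv2).mulVecLin ⊓ LinearMap.ker (dds δ0 dv0 dv1).mulVecLin := by
    ext x
    simp only [Submodule.mem_inf, LinearMap.mem_ker, Matrix.mulVecLin_apply, Matrix.add_mulVec,
      ← Matrix.mulVec_mulVec]
    constructor
    · intro h
      have h0 : wip dv1 bv1 x (dd δ0 bv0 bv1 *ᵥ (dds δ0 dv0 dv1 *ᵥ x)) +
          wip dv1 bv1 x (dds δ1 dv1 dv2 *ᵥ (dd δ1 bv1 bv2 *ᵥ x)) = 0 := by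
        unfold wip
        rw [← dotProduct_add, ← Matrix.mulVec_add, h]
        simp
      rw [aux_adj δ0 dv0 bv0 dv1 bv1 hd0 hb0 hb1, aux_comm dv1 bv1 hb1 x,
        ← aux_adj δ1 dv1 bv1 dv2 bv2 hd1 hb1 hb2] at h0
      have p0 := aux_nonneg dv0 bv0 hd0 hb0 (dds δ0 dv0 dv1 *ᵥ x)
      have p2 := aux_nonneg dv2 bv2 hd2 hb2 (dd δ1 bv1 bv2 *ᵥ x)
      exact ⟨aux_def dv2 bv2 hd2 hb2 _ (by linarith), aux_def dv0 bv0 hd0 hb0 _ (by linarith)⟩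
    · rintro ⟨h1, h2⟩
      simp [h1, h2]
  have hRK : LinearMap.range (dd δ0 bv0 bv1).mulVecLin ≤
      LinearMap.ker (dd δ1 bv1 bv2).mulVecLin := by
    rintro _ ⟨z, rfl⟩
    have : dd δ1 bv1 bv2 * dd δ0 bv0 bv1 = 0 := by
      unfold dd
      calc _ = Matrix.diagonal bv2 * δ1 * ((Matrix.diagonal bv1)⁻¹ * Matrix.diagonal bv1) * δ0 *
            (Matrix.diagonal bv0)⁻¹ := by simp only [Matrix.mul_assoc]
        _ = Matrix.diagonal bv2 * (δ1 * δ0) * (Matrix.diagonal bv0)⁻¹ := by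
            rw [Matrix.nonsing_inv_mul _ (aux_diag_unit _ hb1)]
            simp only [Matrix.mul_assoc, Matrix.one_mul]
        _ = 0 := by simp [hδ]
    simp [this]
  have hRN : LinearMap.range (dd δ0 bv0 bv1).mulVecLin ⊓
      LinearMap.ker (dds δ0 dv0 dv1).mulVecLin = ⊥ := by
    rw [eq_bot_iff]
    rintro _ ⟨⟨z, rfl⟩, h⟩
    simp only [SetLike.mem_coe, LinearMap.mem_ker, Matrix.mulVecLin_apply] at h
    simp only [Submodule.mem_bot, Matrix.mulVecLin_apply]
    apply aux_def dv1 bv1 hd1 hb1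
    rw [aux_adj δ0 dv0 bv0 dv1 bv1 hd0 hb0 hb1, h]
    simp [wip]
  rw [hK]
  generalize hR : LinearMap.range (dd δ0 bv0 bv1).mulVecLin = R at *
  have hr := LinearMap.finrank_range_add_finrank_ker (dds δ0 dv0 dv1).mulVecLin
  have hr2 : Module.finrank ℝ (LinearMap.range (dds δ0 dv0 dv1).mulVecLin) =
      Module.finrank ℝ R := by
    rw [← hR]
    exact aux_rank δ0 dv0 bv0 dv1 bv1 hd0 hb0 hd1 hb1
  generalize LinearMap.ker (dds δ0 dv0 dv1).mulVecLin = N at *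
  generalize LinearMap.ker (dd δ1 bv1 bv2).mulVecLin = K at *
  have e1 := Submodule.finrank_sup_add_finrank_inf_eq R N
  rw [hRN, finrank_bot] at e1
  have htop : R ⊔ N = ⊤ := Submodule.eq_top_of_finrank_eq (by omega)
  have hsup : R ⊔ (K ⊓ N) = K := by
    rw [inf_comm, ← sup_inf_assoc_of_le N hRK, htop, top_inf_eq]
  have hinf : R ⊓ (K ⊓ N) = ⊥ := by
    rw [eq_bot_iff, ← hRN]
    exact inf_le_inf_left _ inf_le_right
  have e2 := Submodule.finrank_sup_add_finrank_inf_eq R (K ⊓ N)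
  rw [hinf, hsup, finrank_bot] at e2
  omega
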